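/- The sequence of functions q ↦ |∑_{k=-n}^{n} (-1)^k q^{k(k-1)/2} · C(2n, n+k)|^{1/(2n)} converges to the constant function 2 uniformly on every compact subset of the open unit ball B = {z ∈ ℂ : |z| < 1}. -/

import Mathlib

open scoped Classical

/-- Asymmetric crossing of two chords: `B = {a,b}` with `a < b` starts strictly
before `C = {c,d}` and they interleave: `a < c < b < d`. -/
def CrossAsym (B C : Finset ℕ) : Prop :=
  ∃ a b c d : ℕ, a < c ∧ c < b ∧ b < d ∧ B = {a, b} ∧ C = {c, d}

/-- Two blocks cross: `a < c < b < d` or `c < a < d < b`. -/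
def Crosses (B C : Finset ℕ) : Prop := CrossAsym B C ∨ CrossAsym C B

/-- A pairing on `[2n] = {1, …, 2n}`: a partition of `{1, …, 2n}` into blocks of size 2. -/
def IsPairing (n : ℕ) (π : Finset (Finset ℕ)) : Prop :=
  (∀ B ∈ π, B.card = 2 ∧ B ⊆ Finset.Icc 1 (2 * n)) ∧
  (∀ x ∈ Finset.Icc 1 (2 * n), ∃! B, B ∈ π ∧ x ∈ B)

/-- Number of crossings of a pairing: the number of unordered pairs of blocks that cross
(each crossing unordered pair `{B, C}` satisfies the asymmetric condition exactly once). -/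
noncomputable def crNum (π : Finset (Finset ℕ)) : ℕ :=
  Set.ncard {p : Finset ℕ × Finset ℕ | p.1 ∈ π ∧ p.2 ∈ π ∧ CrossAsym p.1 p.2}

/-- A pairing is parity-reversing if each block consists of one odd and one even number. -/
def ParityReversing (π : Finset (Finset ℕ)) : Prop :=
  ∀ B ∈ π, ∃ a b : ℕ, B = {a, b} ∧ Odd a ∧ Even b

/-- A pairing is connected if its blocks cannot be split into two nonempty families
with no crossing between the families. -/
def ConnectedPairing (π : Finset (Finset ℕ)) : Prop :=
  ¬ ∃ S T : Finset (Finset ℕ), S ∪ T = π ∧ Disjoint S T ∧ S.Nonempty ∧ T.Nonempty ∧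
      ∀ B ∈ S, ∀ C ∈ T, ¬ Crosses B C

/-- `tCount n k`: the number of pairings on `[2n]` with exactly `k` crossings. -/
noncomputable def tCount (n k : ℕ) : ℕ :=
  Set.ncard {π : Finset (Finset ℕ) | IsPairing n π ∧ crNum π = k}

/-- `rCount n k`: the number of parity-reversing pairings on `[2n]` with exactly `k` crossings. -/
noncomputable def rCount (n k : ℕ) : ℕ :=
  Set.ncard {π : Finset (Finset ℕ) | IsPairing n π ∧ ParityReversing π ∧ crNum π = k}

/-- `bCount n k`: the number of connected parity-reversing pairings on `[2n]`
with exactly `k` crossings. -/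
noncomputable def bCount (n k : ℕ) : ℕ :=
  Set.ncard {π : Finset (Finset ℕ) |
    IsPairing n π ∧ ParityReversing π ∧ ConnectedPairing π ∧ crNum π = k}

/-- `bTot n`: the number of connected parity-reversing pairings on `[2n]` (equals 1 for `n = 0`). -/
noncomputable def bTot (n : ℕ) : ℕ :=
  Set.ncard {π : Finset (Finset ℕ) |
    IsPairing n π ∧ ParityReversing π ∧ ConnectedPairing π}

/-- The Touchard alternating sum `∑_{k=-n}^n (-1)^k q^{k(k-1)/2} C(2n, n+k)`. -/
noncomputable def touchardSum (n : ℕ) (q : ℂ) : ℂ :=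
  ∑ k ∈ Finset.Icc (-(n : ℤ)) (n : ℤ),
    (-1 : ℂ) ^ k * q ^ ((k * (k - 1)) / 2).toNat * ((2 * n).choose ((n : ℤ) + k).toNat : ℂ)

/-- `T_n(q) = ∑_k t_{n,k} q^k` as a complex polynomial function
(all crossing numbers of pairings on `[2n]` satisfy `k ≤ n*n`). -/
noncomputable def Tpoly (n : ℕ) (q : ℂ) : ℂ :=
  ∑ k ∈ Finset.range (n * n + 1), (tCount n k : ℂ) * q ^ k

/-- `T_n(q) = ∑_k t_{n,k} q^k` as a real polynomial function. -/
noncomputable def TpolyR (n : ℕ) (q : ℝ) : ℝ :=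
  ∑ k ∈ Finset.range (n * n + 1), (tCount n k : ℝ) * q ^ k

/-- `R_n(q) = ∑_k r_{n,k} q^k` as a real polynomial function. -/
noncomputable def RpolyR (n : ℕ) (q : ℝ) : ℝ :=
  ∑ k ∈ Finset.range (n * n + 1), (rCount n k : ℝ) * q ^ k

/-- Non-crossing partitions of `{1, …, 2n}` all of whose blocks have even size. -/
noncomputable def NCEvenPartitions (n : ℕ) : Finset (Finset (Finset ℕ)) :=
  ((Finset.Icc 1 (2 * n)).powerset.powerset).filter (fun π =>
    (∀ B ∈ π, B.Nonempty ∧ Even B.card) ∧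
    (∀ x ∈ Finset.Icc 1 (2 * n), ∃! B, B ∈ π ∧ x ∈ B) ∧
    ¬ ∃ a b c d : ℕ, a < b ∧ b < c ∧ c < d ∧
        ∃ B ∈ π, ∃ C ∈ π, B ≠ C ∧ a ∈ B ∧ c ∈ B ∧ b ∈ C ∧ d ∈ C)

/-!
Pairing the terms `k = -j` and `k = j + 1` turns the Touchard sum into
`∑ j, (-1) ^ j q ^ (j(j+1)/2) b (n, j)` with the ballot numbers
`b (n, j) = C(2n, n+j) - C(2n, n+j+1)`. Divided by the Catalan number `b (n, 0)` they are bounded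
by `2j + 1` and converge to it, so by dominated convergence the sum divided by the Catalan number
converges, locally uniformly on the disc, to `∑ j, (-1) ^ j (2j+1) q ^ (j(j+1)/2)`. Jacobi's
identity says that this is `∏ (1 - q ^ n) ^ 3`, which does not vanish. Its `2n`-th root therefore
disappears in the limit and only that of the Catalan number remains, which tends to `√4 = 2`.

Jacobi's identity is the limit of the finite identity
`∑ j ≤ N, (-1) ^ j (2j+1) q ^ (j(j+1)/2) [2N+1, N+1+j] = ∏ m ≤ N, (1 - q ^ m) ^ 2`
between polynomials. The passage from `N` to `N + 1` multiplies the coefficients of `2j + 1` by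
`(1 - q ^ (N+1)) ^ 2`, up to a second difference, which is orthogonal to the linear function
`2j + 1`.
-/

open Filter Finset Topology

lemma succ_choose_two (j : ℕ) : (j + 1).choose 2 = j + j.choose 2 := by
  rw [Nat.choose_succ_succ', Nat.choose_one_right]

section GaussianBinomials

variable {R : Type*} [CommRing R] (q : R)

/-- The Gaussian binomial coefficient `[n, k]` at `q`, defined by the `q`-Pascal rule so that it
makes sense in every commutative ring. It is `0` for `n < k`. -/
def gaussBinom : ℕ → ℕ → R
  | _, 0 => 1
  | 0, _ + 1 => 0
  | n + 1, k + 1 => gaussBinom n k + q ^ (k + 1) * gaussBinom n (k + 1)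

/-- The `q`-Pochhammer symbol `(q; q)_n = (1 - q) ⋯ (1 - q ^ n)`. -/
def qPochhammer (n : ℕ) : R := ∏ m ∈ range n, (1 - q ^ (m + 1))

@[simp]
lemma gaussBinom_zero_right (n : ℕ) : gaussBinom q n 0 = 1 := by cases n <;> rfl

lemma gaussBinom_succ_succ (n k : ℕ) :
    gaussBinom q (n + 1) (k + 1) = gaussBinom q n k + q ^ (k + 1) * gaussBinom q n (k + 1) := rfl

lemma gaussBinom_eq_zero_of_lt {n k : ℕ} (h : n < k) : gaussBinom q n k = 0 := by
  induction n generalizing k with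
  | zero =>
    obtain ⟨k, rfl⟩ := Nat.exists_eq_succ_of_ne_zero h.ne'
    rfl
  | succ n ih =>
    obtain ⟨k, rfl⟩ := Nat.exists_eq_succ_of_ne_zero (Nat.ne_zero_of_lt h)
    rw [Nat.succ_eq_add_one, gaussBinom_succ_succ, ih (by lia), ih (by lia), mul_zero, add_zero]

@[simp]
lemma gaussBinom_self (n : ℕ) : gaussBinom q n n = 1 := by
  induction n with
  | zero => rfl
  | succ n ih => rw [gaussBinom_succ_succ, ih, gaussBinom_eq_zero_of_lt q n.lt_succ_self]; simp

lemma pow_mul_gaussBinom_congr {n k a b : ℕ} (h : k ≤ n → a = b) :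
    q ^ a * gaussBinom q n k = q ^ b * gaussBinom q n k := by
  rcases le_or_gt k n with hk | hk
  · rw [h hk]
  · simp [gaussBinom_eq_zero_of_lt q hk]

lemma gaussBinom_succ_succ' (n k : ℕ) :
    gaussBinom q (n + 1) (k + 1) = q ^ (n - k) * gaussBinom q n k + gaussBinom q n (k + 1) := by
  induction n generalizing k with
  | zero => cases k <;> simp [gaussBinom]
  | succ n ih =>
    rw [gaussBinom_succ_succ]
    cases k with
    | zero =>
      have h := ih 0
      have h' := gaussBinom_succ_succ q n 0
      simp only [gaussBinom_zero_right, Nat.sub_zero] at h h' ⊢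
      linear_combination q * h - h'
    | succ k =>
      have exponents : q ^ (k + 2 + (n - (k + 1))) * gaussBinom q n (k + 1) =
          q ^ (n - k + (k + 1)) * gaussBinom q n (k + 1) :=
        pow_mul_gaussBinom_congr q (by lia)
      rw [pow_add, pow_add] at exponents
      rw [Nat.add_sub_add_right]
      linear_combination ih k + q ^ (k + 2) * ih (k + 1) -
        q ^ (n - k) * gaussBinom_succ_succ q n k - gaussBinom_succ_succ q n (k + 1) + exponents

lemma gaussBinom_symm (a b : ℕ) : gaussBinom q (a + b) a = gaussBinom q (a + b) b := by
  induction h : a + b generalizing a b with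
  | zero =>
    obtain ⟨rfl, rfl⟩ : a = 0 ∧ b = 0 := by lia
    rfl
  | succ n ih =>
    rcases a with _ | a
    · obtain rfl : b = n + 1 := by lia
      simp
    rcases b with _ | b
    · obtain rfl : a = n := by lia
      simp
    rw [gaussBinom_succ_succ, gaussBinom_succ_succ', ih a (b + 1) (by lia),
      ih (a + 1) b (by lia), show n - b = a + 1 by lia, add_comm]

lemma gaussBinom_add_two (n k : ℕ) :
    gaussBinom q (n + 2) (k + 2) = q ^ (n - k) * gaussBinom q n k +
      (1 + q ^ (n + 1)) * gaussBinom q n (k + 1) + q ^ (k + 2) * gaussBinom q n (k + 2) := by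
  have exponents : q ^ (n - k + (k + 1)) * gaussBinom q n (k + 1) =
      q ^ (n + 1) * gaussBinom q n (k + 1) := pow_mul_gaussBinom_congr q (by lia)
  rw [gaussBinom_succ_succ', gaussBinom_succ_succ q n k, gaussBinom_succ_succ q n (k + 1),
    Nat.add_sub_add_right]
  rw [pow_add] at exponents
  linear_combination exponents

lemma qPochhammer_succ (n : ℕ) :
    qPochhammer q (n + 1) = qPochhammer q n * (1 - q ^ (n + 1)) :=
  prod_range_succ _ n

lemma gaussBinom_mul_qPochhammer (a b : ℕ) :
    gaussBinom q (a + b) a * (qPochhammer q a * qPochhammer q b) = qPochhammer q (a + b) := by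
  induction h : a + b generalizing a b with
  | zero =>
    obtain ⟨rfl, rfl⟩ : a = 0 ∧ b = 0 := by lia
    simp [qPochhammer]
  | succ n ih =>
    rcases a with _ | a
    · obtain rfl : b = n + 1 := by lia
      simp [qPochhammer]
    rcases b with _ | b
    · obtain rfl : a = n := by lia
      simp [qPochhammer]
    obtain rfl : n = a + b + 1 := by lia
    have left := ih a (b + 1) (by lia)
    have right := ih (a + 1) b (by lia)
    simp only [gaussBinom_succ_succ, qPochhammer_succ] at left right ⊢
    linear_combination (1 - q ^ (a + 1)) * left + q ^ (a + 1) * (1 - q ^ (b + 1)) * right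

end GaussianBinomials

section FiniteJacobi

variable {R : Type*} [CommRing R]

/-- The coefficient of `2j + 1` in the finite form of Jacobi's identity. -/
def jacobiCoeff (q : R) (N j : ℕ) : R :=
  (-1) ^ j * q ^ (j + 1).choose 2 * gaussBinom q (2 * N + 1) (N + 1 + j)

lemma jacobiCoeff_eq_zero_of_lt (q : R) {N j : ℕ} (h : N < j) : jacobiCoeff q N j = 0 := by
  rw [jacobiCoeff, gaussBinom_eq_zero_of_lt q (by lia), mul_zero]

lemma jacobiCoeff_succ_zero (q : R) (N : ℕ) :
    jacobiCoeff q (N + 1) 0 = (1 - q ^ (N + 1)) ^ 2 * jacobiCoeff q N 0 -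
      q ^ (N + 1) * (jacobiCoeff q N 1 - 3 * jacobiCoeff q N 0) := by
  have symm : gaussBinom q (2 * N + 1) N = gaussBinom q (2 * N + 1) (N + 1) := by
    simpa only [two_mul, add_assoc] using gaussBinom_symm q N (N + 1)
  have recurrence := gaussBinom_add_two q (2 * N + 1) N
  rw [show 2 * N + 1 - N = N + 1 by lia, symm] at recurrence
  simp only [jacobiCoeff, add_zero, zero_add, Nat.choose_self, Nat.choose_eq_zero_of_lt one_lt_two,
    mul_add, mul_one, add_right_comm _ 2 1]
  linear_combination recurrence

lemma jacobiCoeff_succ_succ (q : R) (N j : ℕ) :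
    jacobiCoeff q (N + 1) (j + 1) = (1 - q ^ (N + 1)) ^ 2 * jacobiCoeff q N (j + 1) -
      q ^ (N + 1) *
        (jacobiCoeff q N j - 2 * jacobiCoeff q N (j + 1) + jacobiCoeff q N (j + 2)) := by
  have recurrence := gaussBinom_add_two q (2 * N + 1) (N + 1 + j)
  have exponents : q ^ (j + 1 + (2 * N + 1 - (N + 1 + j))) * gaussBinom q (2 * N + 1) (N + 1 + j) =
      q ^ (N + 1) * gaussBinom q (2 * N + 1) (N + 1 + j) := pow_mul_gaussBinom_congr q (by lia)
  rw [pow_add] at exponents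
  simp only [jacobiCoeff, succ_choose_two (j + 2), succ_choose_two (j + 1),
    show 2 * (N + 1) + 1 = 2 * N + 1 + 2 by ring, show N + 1 + 1 + (j + 1) = N + 1 + j + 2 by ring,
    ← add_assoc (N + 1) j]
  rw [recurrence]
  linear_combination (-(-1) ^ j * q ^ (j + 1).choose 2) * exponents

lemma sum_odd_mul_second_difference (c : ℕ → R) (n : ℕ) :
    c 1 - 3 * c 0 + ∑ j ∈ range n, (2 * (j : R) + 3) * (c j - 2 * c (j + 1) + c (j + 2)) =
      (2 * n + 1) * c (n + 1) - (2 * n + 3) * c n := by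
  induction n with
  | zero => simp
  | succ n ih =>
    rw [sum_range_succ, ← add_assoc, ih]
    push_cast
    ring

theorem sum_odd_mul_jacobiCoeff (q : R) (N : ℕ) :
    ∑ j ∈ range (N + 1), (2 * (j : R) + 1) * jacobiCoeff q N j = qPochhammer q N ^ 2 := by
  induction N with
  | zero => simp [jacobiCoeff, qPochhammer]
  | succ N ih =>
    have last : jacobiCoeff q N (N + 1) = 0 := jacobiCoeff_eq_zero_of_lt q (by lia)
    have next : jacobiCoeff q N (N + 1 + 1) = 0 := jacobiCoeff_eq_zero_of_lt q (by lia)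
    have differences := sum_odd_mul_second_difference (jacobiCoeff q N) (N + 1)
    rw [next, last, mul_zero, mul_zero, sub_zero] at differences
    have shifted : jacobiCoeff q N 0 +
        ∑ j ∈ range (N + 1), (2 * (j : R) + 3) * jacobiCoeff q N (j + 1) =
          qPochhammer q N ^ 2 := by
      rw [← ih, sum_range_succ, last, mul_zero, add_zero, sum_range_succ' _ N, add_comm]
      push_cast
      ring_nf
    have step (j : ℕ) : (2 * ((j + 1 : ℕ) : R) + 1) * jacobiCoeff q (N + 1) (j + 1) =
        (1 - q ^ (N + 1)) ^ 2 * ((2 * (j : R) + 3) * jacobiCoeff q N (j + 1)) -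
        q ^ (N + 1) * ((2 * (j : R) + 3) * (jacobiCoeff q N j - 2 * jacobiCoeff q N (j + 1) +
          jacobiCoeff q N (j + 2))) := by
      rw [jacobiCoeff_succ_succ]
      push_cast
      ring
    simp only [sum_range_succ' _ (N + 1), step, sum_sub_distrib, ← mul_sum, jacobiCoeff_succ_zero,
      qPochhammer_succ]
    push_cast
    linear_combination (1 - q ^ (N + 1)) ^ 2 * shifted - q ^ (N + 1) * differences

end FiniteJacobi

section Jacobi

variable {𝕜 : Type*} [NormedField 𝕜] {q : 𝕜}

lemma one_sub_pow_succ_ne_zero (hq : ‖q‖ < 1) (n : ℕ) : 1 - q ^ (n + 1) ≠ 0 := fun h ↦ by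
  have := pow_lt_one₀ (norm_nonneg q) hq n.succ_ne_zero
  rw [← norm_pow, ← sub_eq_zero.1 h, norm_one] at this
  exact this.false

lemma qPochhammer_ne_zero (hq : ‖q‖ < 1) (n : ℕ) : qPochhammer q n ≠ 0 :=
  prod_ne_zero_iff.2 fun m _ ↦ one_sub_pow_succ_ne_zero hq m

lemma gaussBinom_add_eq_div (hq : ‖q‖ < 1) (a b : ℕ) :
    gaussBinom q (a + b) a = qPochhammer q (a + b) / (qPochhammer q a * qPochhammer q b) :=
  eq_div_of_mul_eq (mul_ne_zero (qPochhammer_ne_zero hq a) (qPochhammer_ne_zero hq b))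
    (gaussBinom_mul_qPochhammer q a b)

lemma summable_norm_neg_pow_succ (hq : ‖q‖ < 1) : Summable fun n : ℕ ↦ ‖-q ^ (n + 1)‖ := by
  simpa using (summable_nat_add_iff 1).2 (summable_geometric_of_lt_one (norm_nonneg q) hq)

lemma norm_pow_choose_two_le {r : ℝ} (hq : ‖q‖ ≤ r) (hr : r ≤ 1) (j : ℕ) :
    ‖q ^ (j + 1).choose 2‖ ≤ r ^ j := by
  have r_nonneg : 0 ≤ r := (norm_nonneg q).trans hq
  calc ‖q ^ (j + 1).choose 2‖ = ‖q‖ ^ (j + 1).choose 2 := norm_pow _ _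
    _ ≤ r ^ (j + 1).choose 2 := by gcongr
    _ ≤ r ^ j := pow_le_pow_of_le_one r_nonneg hr (by rw [succ_choose_two]; lia)

lemma summable_odd_mul_pow {r : ℝ} (hr : ‖r‖ < 1) :
    Summable fun j : ℕ ↦ (2 * (j : ℝ) + 1) * r ^ j := by
  have linear := (summable_pow_mul_geometric_of_norm_lt_one 1 hr).mul_left 2
  refine (linear.add (summable_geometric_of_norm_lt_one hr)).congr fun j ↦ ?_
  ring

lemma tsum_alternating_pow_choose_two_mul_gaussBinom (q : 𝕜) (N : ℕ) :
    ∑' j : ℕ, (-1) ^ j * q ^ (j + 1).choose 2 *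
      (gaussBinom q (2 * N + 1) (N + 1 + j) * (2 * j + 1)) = qPochhammer q N ^ 2 := by
  rw [← sum_odd_mul_jacobiCoeff, tsum_eq_sum (s := range (N + 1))]
  · exact sum_congr rfl fun j _ ↦ by rw [jacobiCoeff]; ring
  · intro j hj
    rw [mem_range, not_lt] at hj
    rw [gaussBinom_eq_zero_of_lt q (by lia), zero_mul, mul_zero]

variable [CompleteSpace 𝕜]

lemma tendsto_tsum_alternating_pow_choose_two {ι : Type*} {l : Filter ι} {z : ι → 𝕜}
    {w : ι → ℕ → 𝕜} {v : ℕ → 𝕜} {C : ℝ} (hq : ‖q‖ < 1) (hz : Tendsto z l (𝓝 q))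
    (hw : ∀ j, Tendsto (w · j) l (𝓝 (v j))) (hC : ∀ i j, ‖w i j‖ ≤ C * (2 * j + 1)) :
    Tendsto (fun i ↦ ∑' j, (-1) ^ j * z i ^ (j + 1).choose 2 * w i j) l
      (𝓝 (∑' j, (-1) ^ j * q ^ (j + 1).choose 2 * v j)) := by
  obtain ⟨r, hqr, hr⟩ := exists_between hq
  have r_nonneg : 0 ≤ r := (norm_nonneg q).trans hqr.le
  have bound_summable : Summable fun j : ℕ ↦ C * ((2 * (j : ℝ) + 1) * r ^ j) :=
    (summable_odd_mul_pow (by rwa [Real.norm_of_nonneg r_nonneg])).mul_left C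
  refine tendsto_tsum_of_dominated_convergence bound_summable
    (fun j ↦ ((hz.pow _).const_mul _).mul (hw j)) ?_
  filter_upwards [hz.norm.eventually_lt_const hqr] with i hi j
  calc ‖(-1) ^ j * z i ^ (j + 1).choose 2 * w i j‖
      = ‖z i ^ (j + 1).choose 2‖ * ‖w i j‖ := by simp
    _ ≤ r ^ j * (C * (2 * j + 1)) := by
      gcongr
      exacts [norm_pow_choose_two_le hi.le hr.le j, hC i j]
    _ = C * ((2 * j + 1) * r ^ j) := by ring

lemma tprod_one_sub_pow_succ_ne_zero (hq : ‖q‖ < 1) : ∏' n : ℕ, (1 - q ^ (n + 1)) ≠ 0 := by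
  have := tprod_one_add_ne_zero_of_summable (f := fun n : ℕ ↦ -q ^ (n + 1))
    (by simpa only [← sub_eq_add_neg] using one_sub_pow_succ_ne_zero hq)
    (summable_norm_neg_pow_succ hq)
  simpa only [← sub_eq_add_neg] using this

lemma tendsto_qPochhammer (hq : ‖q‖ < 1) :
    Tendsto (qPochhammer q) atTop (𝓝 (∏' n : ℕ, (1 - q ^ (n + 1)))) := by
  have := multipliable_one_add_of_summable (f := fun n : ℕ ↦ -q ^ (n + 1))
    (summable_norm_neg_pow_succ hq)
  simp only [← sub_eq_add_neg] at this
  exact this.hasProd.tendsto_prod_nat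

lemma tendsto_gaussBinom_add {ι : Type*} {l : Filter ι} {a b : ι → ℕ} (hq : ‖q‖ < 1)
    (ha : Tendsto a l atTop) (hb : Tendsto b l atTop) :
    Tendsto (fun i ↦ gaussBinom q (a i + b i) (a i)) l (𝓝 (∏' n : ℕ, (1 - q ^ (n + 1)))⁻¹) := by
  have P_ne := tprod_one_sub_pow_succ_ne_zero hq
  have P_lim := tendsto_qPochhammer hq
  have quotient := (P_lim.comp (ha.atTop_add_atTop hb)).div ((P_lim.comp ha).mul (P_lim.comp hb))
    (mul_ne_zero P_ne P_ne)
  rw [div_mul_cancel_left₀ P_ne] at quotient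
  simp only [gaussBinom_add_eq_div hq]
  exact quotient

lemma exists_norm_gaussBinom_le (hq : ‖q‖ < 1) : ∃ C, ∀ n k, ‖gaussBinom q n k‖ ≤ C := by
  have P_lim := tendsto_qPochhammer hq
  obtain ⟨A, hA⟩ := P_lim.norm.bddAbove_range
  obtain ⟨B, hB⟩ := (P_lim.inv₀ (tprod_one_sub_pow_succ_ne_zero hq)).norm.bddAbove_range
  replace hA (n : ℕ) : ‖qPochhammer q n‖ ≤ A := hA ⟨n, rfl⟩
  replace hB (n : ℕ) : ‖(qPochhammer q n)⁻¹‖ ≤ B := hB ⟨n, rfl⟩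
  have A_nonneg : 0 ≤ A := (norm_nonneg _).trans (hA 0)
  have B_nonneg : 0 ≤ B := (norm_nonneg _).trans (hB 0)
  refine ⟨A * (B * B), fun n k ↦ ?_⟩
  rcases le_or_gt k n with hk | hk
  · obtain ⟨b, rfl⟩ := Nat.exists_eq_add_of_le hk
    rw [gaussBinom_add_eq_div hq, div_eq_mul_inv, mul_inv, norm_mul, norm_mul]
    gcongr
    exacts [hA _, hB _, hB _]
  · rw [gaussBinom_eq_zero_of_lt q hk, norm_zero]
    positivity

theorem tsum_alternating_odd_mul_pow_choose_two (hq : ‖q‖ < 1) :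
    ∑' j : ℕ, (-1) ^ j * q ^ (j + 1).choose 2 * (2 * (j : 𝕜) + 1) =
      (∏' n : ℕ, (1 - q ^ (n + 1))) ^ 3 := by
  set P := ∏' n : ℕ, (1 - q ^ (n + 1))
  obtain ⟨C, hC⟩ := exists_norm_gaussBinom_le hq
  have norm_odd_le (j : ℕ) : ‖2 * (j : 𝕜) + 1‖ ≤ 2 * (j : ℝ) + 1 := by
    simpa using Nat.norm_cast_le (α := 𝕜) (2 * j + 1)
  have gaussBinom_lim (j : ℕ) :
      Tendsto (fun N ↦ gaussBinom q (2 * N + 1) (N + 1 + j)) atTop (𝓝 P⁻¹) := by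
    have lower_lim : Tendsto (fun N ↦ N + 1 + j) atTop atTop := by
      simpa only [add_assoc] using tendsto_add_atTop_nat (1 + j)
    refine (tendsto_gaussBinom_add hq lower_lim (tendsto_sub_atTop_nat j)).congr' ?_
    filter_upwards [eventually_ge_atTop j] with N hN
    rw [show N + 1 + j + (N - j) = 2 * N + 1 by lia]
  have lim := tendsto_tsum_alternating_pow_choose_two (C := C) hq tendsto_const_nhds
    (fun j ↦ (gaussBinom_lim j).mul_const (2 * (j : 𝕜) + 1)) fun N j ↦ by
      rw [norm_mul]
      gcongr
      exacts [(norm_nonneg _).trans (hC 0 0), hC _ _, norm_odd_le j]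
  simp only [tsum_alternating_pow_choose_two_mul_gaussBinom, mul_left_comm _ P⁻¹,
    tsum_mul_left] at lim
  have key := tendsto_nhds_unique lim ((tendsto_qPochhammer hq).pow 2)
  rw [inv_mul_eq_iff_eq_mul₀ (tprod_one_sub_pow_succ_ne_zero hq)] at key
  rw [key, ← pow_succ']

end Jacobi

section Ballot

lemma choose_two_mul_add_succ_mul (n j : ℕ) :
    ((2 * n).choose (n + j + 1) : ℝ) * (n + j + 1) = (2 * n).choose (n + j) * (n - j) := by
  rcases le_or_gt j n with hj | hj
  · have h := Nat.choose_succ_right_eq (2 * n) (n + j)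
    rw [show 2 * n - (n + j) = n - j by lia] at h
    exact_mod_cast congrArg (Nat.cast (R := ℝ)) h
  · rw [Nat.choose_eq_zero_of_lt (by lia), Nat.choose_eq_zero_of_lt (by lia)]
    simp

/-- The ballot number `C(2n, n+j) - C(2n, n+j+1)`, normalised by the Catalan number, which is its
value at `j = 0`. -/
noncomputable def ballotRatio (n j : ℕ) : ℝ :=
  ((2 * n).choose (n + j) - (2 * n).choose (n + j + 1)) / catalan n

lemma succ_mul_catalan_cast (n : ℕ) : ((n : ℝ) + 1) * catalan n = (2 * n).choose n := by
  rw [← Nat.centralBinom_eq_two_mul_choose]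
  exact_mod_cast succ_mul_catalan_eq_centralBinom n

lemma catalan_cast_pos (n : ℕ) : (0 : ℝ) < catalan n := by
  have := (succ_mul_catalan_cast n).symm ▸ Nat.cast_pos.2 (Nat.choose_pos (by lia : n ≤ 2 * n))
  exact pos_of_mul_pos_right this (by positivity)

lemma ballotRatio_eq (n j : ℕ) :
    ballotRatio n j = (2 * n).choose (n + j) / (2 * n).choose n * ((n + 1) / (n + (j + 1))) *
      (2 * j + 1) := by
  have catalan_ne := (catalan_cast_pos n).ne'
  have : (n : ℝ) + (j + 1) ≠ 0 := by positivity
  have : (n : ℝ) + 1 ≠ 0 := by positivity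
  rw [ballotRatio, ← succ_mul_catalan_cast]
  field_simp
  linear_combination -choose_two_mul_add_succ_mul n j

lemma ballotRatio_nonneg (n j : ℕ) : 0 ≤ ballotRatio n j := by
  rw [ballotRatio_eq]
  positivity

lemma ballotRatio_le (n j : ℕ) : ballotRatio n j ≤ 2 * j + 1 := by
  have choose_ratio_le : ((2 * n).choose (n + j) : ℝ) / (2 * n).choose n ≤ 1 :=
    div_le_one_of_le₀ (mod_cast Nat.choose_le_centralBinom (n + j) n) (by positivity)
  have succ_ratio_le : ((n : ℝ) + 1) / (n + (j + 1)) ≤ 1 :=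
    div_le_one_of_le₀ (by gcongr; simp) (by positivity)
  rw [ballotRatio_eq]
  exact mul_le_of_le_one_left (by positivity)
    (mul_le_one₀ choose_ratio_le (by positivity) succ_ratio_le)

lemma ballotRatio_eq_zero_of_lt {n j : ℕ} (h : n < j) : ballotRatio n j = 0 := by
  simp [ballotRatio_eq, Nat.choose_eq_zero_of_lt (by lia : 2 * n < n + j)]

lemma tendsto_natCast_add_div_add (a b : ℝ) :
    Tendsto (fun n : ℕ ↦ ((n : ℝ) + a) / (n + b)) atTop (𝓝 1) := by
  simpa [add_comm] using tendsto_add_mul_div_add_mul_atTop_nhds a b (1 : ℝ) one_ne_zero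

lemma tendsto_choose_two_mul_div (j : ℕ) :
    Tendsto (fun n : ℕ ↦ ((2 * n).choose (n + j) : ℝ) / (2 * n).choose n) atTop (𝓝 1) := by
  induction j with
  | zero =>
    refine tendsto_const_nhds.congr fun n ↦ (div_self ?_).symm
    exact_mod_cast (Nat.choose_pos (by lia)).ne'
  | succ j ih =>
    have step := ih.mul (tendsto_natCast_add_div_add (-j) (j + 1))
    rw [mul_one] at step
    refine step.congr fun n ↦ ?_
    have : (n : ℝ) + (j + 1) ≠ 0 := by positivity
    rw [div_mul_div_comm, mul_comm ((2 * n).choose n : ℝ), ← div_div]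
    congr 1
    rw [div_eq_iff this, ← sub_eq_add_neg, ← choose_two_mul_add_succ_mul, ← add_assoc, ← add_assoc]

lemma tendsto_ballotRatio (j : ℕ) :
    Tendsto (fun n ↦ ballotRatio n j) atTop (𝓝 (2 * j + 1)) := by
  simp only [ballotRatio_eq]
  simpa using ((tendsto_choose_two_mul_div j).mul
    (tendsto_natCast_add_div_add 1 (j + 1))).mul_const (2 * (j : ℝ) + 1)

end Ballot

section CatalanRoot

lemma four_pow_rpow_one_div_two_mul {n : ℕ} (hn : n ≠ 0) :
    ((4 : ℝ) ^ n) ^ (1 / (2 * (n : ℝ))) = 2 := by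
  rw [show (4 : ℝ) = 2 ^ 2 by norm_num, ← pow_mul, one_div,
    show 2 * (n : ℝ) = (2 * n : ℕ) by push_cast; rfl,
    Real.pow_rpow_inv_natCast zero_le_two (by lia)]

lemma catalan_le_four_pow (n : ℕ) : catalan n ≤ 4 ^ n :=
  calc catalan n ≤ (n + 1) * catalan n := Nat.le_mul_of_pos_left _ n.succ_pos
    _ = n.centralBinom := succ_mul_catalan_eq_centralBinom n
    _ ≤ 4 ^ n := Nat.centralBinom_le_four_pow n

lemma four_pow_le_sq_mul_catalan {n : ℕ} (hn : 0 < n) : 4 ^ n ≤ (2 * n) ^ 2 * catalan n :=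
  calc 4 ^ n ≤ 2 * n * n.centralBinom := Nat.four_pow_le_two_mul_self_mul_centralBinom n hn
    _ = 2 * n * ((n + 1) * catalan n) := by rw [succ_mul_catalan_eq_centralBinom]
    _ ≤ 2 * n * ((2 * n) * catalan n) := by gcongr; lia
    _ = (2 * n) ^ 2 * catalan n := by ring

lemma tendsto_two_mul_natCast_atTop : Tendsto (fun n : ℕ ↦ 2 * (n : ℝ)) atTop atTop :=
  tendsto_natCast_atTop_atTop.const_mul_atTop two_pos

lemma tendsto_catalan_rpow :
    Tendsto (fun n : ℕ ↦ (catalan n : ℝ) ^ (1 / (2 * (n : ℝ)))) atTop (𝓝 2) := by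
  have linear_root : Tendsto (fun n : ℕ ↦ (2 * (n : ℝ)) ^ (1 / (2 * (n : ℝ)))) atTop (𝓝 1) :=
    tendsto_rpow_div.comp tendsto_two_mul_natCast_atTop
  have lower : Tendsto (fun n : ℕ ↦ 2 / ((2 * (n : ℝ)) ^ (1 / (2 * (n : ℝ)))) ^ 2) atTop
      (𝓝 (2 / 1 ^ 2)) := tendsto_const_nhds.div (linear_root.pow 2) (by norm_num)
  rw [one_pow, div_one] at lower
  refine tendsto_of_tendsto_of_tendsto_of_le_of_le' lower tendsto_const_nhds ?_ ?_
  · filter_upwards [eventually_gt_atTop 0] with n hn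
    rw [Real.rpow_pow_comm (by positivity)]
    nth_rw 1 [← four_pow_rpow_one_div_two_mul hn.ne']
    rw [← Real.div_rpow (by positivity) (by positivity)]
    gcongr
    rw [div_le_iff₀' (by positivity)]
    exact_mod_cast four_pow_le_sq_mul_catalan hn
  · filter_upwards [eventually_gt_atTop 0] with n hn
    refine le_trans ?_ (four_pow_rpow_one_div_two_mul hn.ne').le
    gcongr
    exact_mod_cast catalan_le_four_pow n

end CatalanRoot

section Touchard

lemma sum_Icc_neg_eq_sum_range_pairs {G : Type*} [AddCommGroup G] (f : ℤ → G) (n : ℕ) :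
    ∑ k ∈ Icc (-(n : ℤ)) n, f k = ∑ j ∈ range (n + 1), (f (-j) + f (j + 1)) - f (n + 1) := by
  induction n with
  | zero => simp
  | succ n ih =>
    rw [sum_range_succ, Nat.cast_succ, sum_Icc_succ_eq_add_endpoints, ih]
    abel

lemma toNat_succ_mul_self_div_two (j : ℕ) :
    (((j : ℤ) + 1) * j / 2).toNat = (j + 1).choose 2 := by
  rw [Nat.choose_two_right, Nat.add_sub_cancel]
  norm_cast

lemma touchardSum_eq_sum_range (n : ℕ) (q : ℂ) :
    touchardSum n q = ∑ j ∈ range (n + 1), (-1) ^ j * q ^ (j + 1).choose 2 *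
      (((2 * n).choose (n + j) : ℂ) - (2 * n).choose (n + j + 1)) := by
  have top : (2 * n).choose ((n : ℤ) + (n + 1)).toNat = 0 := Nat.choose_eq_zero_of_lt (by lia)
  rw [touchardSum, sum_Icc_neg_eq_sum_range_pairs, top, Nat.cast_zero, mul_zero, sub_zero]
  refine sum_congr rfl fun j hj ↦ ?_
  have j_le : j ≤ n := mem_range_succ_iff.1 hj
  have choose_left : (2 * n).choose ((n : ℤ) + -j).toNat = (2 * n).choose (n + j) :=
    Nat.choose_symm_of_eq_add (by lia)
  have sign_left : (-1 : ℂ) ^ (-(j : ℤ)) = (-1) ^ j := by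
    rw [zpow_neg, zpow_natCast, ← inv_pow, inv_neg_one]
  have sign_right : (-1 : ℂ) ^ ((j : ℤ) + 1) = -(-1) ^ j := by
    rw [zpow_add_one₀ (by norm_num), zpow_natCast, mul_neg_one]
  rw [choose_left, sign_left, sign_right, show -(j : ℤ) * (-j - 1) = (j + 1) * j by ring,
    add_sub_cancel_right, toNat_succ_mul_self_div_two,
    show ((n : ℤ) + (j + 1)).toNat = n + j + 1 by lia]
  ring

lemma touchardSum_div_catalan (n : ℕ) (q : ℂ) :
    touchardSum n q / catalan n =
      ∑' j : ℕ, (-1) ^ j * q ^ (j + 1).choose 2 * (ballotRatio n j : ℂ) := by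
  rw [touchardSum_eq_sum_range, tsum_eq_sum (s := range (n + 1)), sum_div]
  · refine sum_congr rfl fun j _ ↦ ?_
    rw [ballotRatio, mul_div_assoc]
    push_cast
    rfl
  · intro j hj
    rw [ballotRatio_eq_zero_of_lt (by simpa using hj), Complex.ofReal_zero, mul_zero]

/-- Convergence along `atTop ×ˢ 𝓝 q` is what makes the limit locally uniform in `q`. -/
theorem tendsto_touchardSum_div_catalan {q : ℂ} (hq : ‖q‖ < 1) :
    Tendsto (fun y : ℕ × ℂ ↦ touchardSum y.1 y.2 / catalan y.1) (atTop ×ˢ 𝓝 q)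
      (𝓝 ((∏' n : ℕ, (1 - q ^ (n + 1))) ^ 3)) := by
  simp only [touchardSum_div_catalan, ← tsum_alternating_odd_mul_pow_choose_two hq]
  refine tendsto_tsum_alternating_pow_choose_two (C := 1) hq tendsto_snd (fun j ↦ ?_) fun y j ↦ ?_
  · have := ((tendsto_ballotRatio j).comp (tendsto_fst (g := 𝓝 q))).ofReal
    push_cast at this
    exact this
  · rw [Complex.norm_of_nonneg (ballotRatio_nonneg _ _), one_mul]
    exact ballotRatio_le _ _

theorem tendstoLocallyUniformlyOn_norm_touchardSum_rpow :
    TendstoLocallyUniformlyOn (fun (n : ℕ) (q : ℂ) ↦ ‖touchardSum n q‖ ^ (1 / (2 * (n : ℝ))))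
      (fun _ ↦ 2) atTop (Metric.ball 0 1) := by
  rw [Metric.isOpen_ball.tendstoLocallyUniformlyOn_iff_forall_tendsto]
  intro q hq
  rw [mem_ball_zero_iff] at hq
  rw [← Uniform.tendsto_nhds_right]
  have exponent_lim : Tendsto (fun y : ℕ × ℂ ↦ 1 / (2 * (y.1 : ℝ))) (atTop ×ˢ 𝓝 q) (𝓝 0) :=
    (tendsto_two_mul_natCast_atTop.const_div_atTop 1).comp tendsto_fst
  have quotient_root := (tendsto_touchardSum_div_catalan hq).norm.rpow exponent_lim
    (.inl (norm_ne_zero_iff.2 (pow_ne_zero 3 (tprod_one_sub_pow_succ_ne_zero hq))))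
  have product_root := (tendsto_catalan_rpow.comp tendsto_fst).mul quotient_root
  rw [Real.rpow_zero, mul_one] at product_root
  refine product_root.congr fun ⟨n, z⟩ ↦ ?_
  have catalan_pos := catalan_cast_pos n
  rw [Function.comp_apply, ← Real.mul_rpow catalan_pos.le (norm_nonneg _), norm_div,
    Complex.norm_natCast, mul_div_cancel₀ _ catalan_pos.ne']

end Touchard

/-- The functions `q ↦ |∑_{k=-n}^n (-1)^k q^{k(k-1)/2} C(2n, n+k)|^{1/(2n)}` converge to the
constant `2` uniformly on every compact subset of the open unit ball of `ℂ`. -/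
theorem touchardSum_abs_rpow_tendstoUniformlyOn (K : Set ℂ) (hK : IsCompact K)
    (hKball : K ⊆ Metric.ball (0 : ℂ) 1) :
    TendstoUniformlyOn
      (fun (n : ℕ) (q : ℂ) => ‖touchardSum n q‖ ^ ((1 : ℝ) / (2 * (n : ℝ))))
      (fun _ => 2) Filter.atTop K :=
  (tendstoLocallyUniformlyOn_iff_forall_isCompact Metric.isOpen_ball).1
    tendstoLocallyUniformlyOn_norm_touchardSum_rpow K hKball hK
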